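/- Let k ≥ 100 be an integer and let Ω be a subinterval of [0,1) with μ(Ω) ≥ 2^{−2^k − k}. Then there exists an integer a ≥ 0 such that the interval [a·2^{−2^{k+1} − k}, (a+1)·2^{−2^{k+1} − k}) is contained in Ω and has empty intersection with H_{b,k}(Ω) for every integer b with 2 ≤ b ≤ k. -/

import Mathlib

open scoped Classical

/-- `F M N α₁ α₂ x = |#{j : M ≤ j < M+N, α₁ ≤ x_j < α₂} − (α₂ − α₁)·N|`. -/
noncomputable def F (M N : ℕ) (α₁ α₂ : ℝ) (x : ℕ → ℝ) : ℝ :=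
  |(((Finset.Ico M (M + N)).filter fun j => α₁ ≤ x j ∧ x j < α₂).card : ℝ) -
    (α₂ - α₁) * N|

/-- The sequence `({b^j x})_{j ≥ 0}` of fractional parts. -/
noncomputable def bseq (b : ℕ) (x : ℝ) : ℕ → ℝ := fun j => Int.fract ((b : ℝ) ^ j * x)

/-- `N_k^{(b)} = ⌈2^k · log 2 / log b⌉`. -/
noncomputable def Nkb (b k : ℕ) : ℕ := ⌈(2 : ℝ) ^ k * Real.log 2 / Real.log b⌉₊

/-- `n_k^{(b)} = ⌈log₂(N_{k+1}^{(b)} − N_k^{(b)} − 4k)⌉`. -/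
noncomputable def nkb (b k : ℕ) : ℕ :=
  ⌈Real.logb 2 ((Nkb b (k + 1) : ℝ) - Nkb b k - 4 * k)⌉₊

/-- `T_b(k) = ⌈n_k^{(b)} · log 2 / (2 log b)⌉`. -/
noncomputable def Tbk (b k : ℕ) : ℕ :=
  ⌈(nkb b k : ℝ) * Real.log 2 / (2 * Real.log b)⌉₊

/-- The exceptional set `H_{b,k}(A)`. -/
noncomputable def Hset (b k : ℕ) (A : Set ℝ) : Set ℝ :=
  ⋃ (h : ℕ) (_ : 1 ≤ h) (_ : h ≤ Tbk b k) (a : ℕ) (_ : a < b ^ h)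
    (ℓ : ℕ) (_ : nkb b k ≤ 2 * ℓ) (_ : ℓ ≤ nkb b k)
    (m : ℕ) (_ : Nkb b k + 4 * k + m * 2 ^ ℓ + 2 ^ (ℓ - 1) ≤ Nkb b (k + 1)),
    {x ∈ A | 46 * (2 : ℝ) ^ (((ℓ : ℝ) - 1) / 2) * (h : ℝ) ^ (-(3 / 2) : ℝ) *
        Real.sqrt ((nkb b k : ℝ) - ℓ + 1) <
      F (Nkb b k + 4 * k + m * 2 ^ ℓ) (2 ^ (ℓ - 1))
        ((a : ℝ) / (b : ℝ) ^ h) (((a : ℝ) + 1) / (b : ℝ) ^ h) (bseq b x)}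


lemma sum_range_mul_aux (f : ℕ → ℝ) (m B : ℕ) :
    ∑ y ∈ Finset.range (m * B), f y =
      ∑ z ∈ Finset.range m, ∑ r ∈ Finset.range B, f (z * B + r) := by
  induction m with
  | zero => simp
  | succ m ih =>
    rw [Nat.succ_mul, Finset.sum_range_add, ih, Finset.sum_range_succ]

lemma prod_sum_aux (B : ℕ) (hB : 0 < B) (g : ℕ → ℝ) (n : ℕ) :
    ∑ y ∈ Finset.range (B ^ n), ∏ q ∈ Finset.range n, g ((y / B ^ q) % B) =
      (∑ a ∈ Finset.range B, g a) ^ n := by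
  induction n with
  | zero => simp
  | succ n ih =>
    rw [pow_succ, sum_range_mul_aux, pow_succ, ← ih, Finset.sum_mul]
    refine Finset.sum_congr rfl fun z _ => ?_
    rw [Finset.mul_sum]
    refine Finset.sum_congr rfl fun r hr => ?_
    rw [Finset.mem_range] at hr
    rw [Finset.prod_range_succ']
    congr 1
    · refine Finset.prod_congr rfl fun q _ => ?_
      rw [pow_succ', ← Nat.div_div_eq_div_mul]
      have : (z * B + r) / B = z := by
        rw [Nat.add_comm, Nat.add_mul_div_right _ _ hB, Nat.div_eq_of_lt hr, Nat.zero_add]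
      rw [this]
    · have : (z * B + r) % B = r := by
        rw [Nat.add_comm, Nat.add_mul_mod_self_right, Nat.mod_eq_of_lt hr]
      simp [this]

lemma prod_sum_off (b h s n e : ℕ) (hb : 0 < b) (g : ℕ → ℝ) :
    ∑ y ∈ Finset.range (b ^ (s + h * n + e)),
      ∏ q ∈ Finset.range n, g ((y / b ^ (s + h * q)) % b ^ h) =
      (b : ℝ) ^ (s + e) * (∑ a ∈ Finset.range (b ^ h), g a) ^ n := by
  have e1 : b ^ (s + h * n + e) = (b ^ e * (b ^ h) ^ n) * b ^ s := by
    rw [← pow_mul]; ring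
  rw [e1, sum_range_mul_aux]
  have hs : 0 < b ^ s := by positivity
  have step : ∀ z ∈ Finset.range (b ^ e * (b ^ h) ^ n), ∑ r ∈ Finset.range (b ^ s),
      ∏ q ∈ Finset.range n, g (((z * b ^ s + r) / b ^ (s + h * q)) % b ^ h) =
      (b : ℝ) ^ s * ∏ q ∈ Finset.range n, g ((z / (b ^ h) ^ q) % b ^ h) := by
    intro z _
    rw [Finset.sum_congr rfl (g := fun _ => ∏ q ∈ Finset.range n, g ((z / (b ^ h) ^ q) % b ^ h))]
    · simp
    · intro r hr
      rw [Finset.mem_range] at hr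
      refine Finset.prod_congr rfl fun q _ => ?_
      rw [pow_add, ← Nat.div_div_eq_div_mul, pow_mul]
      have : (z * b ^ s + r) / b ^ s = z := by
        rw [Nat.add_comm, Nat.add_mul_div_right _ _ hs, Nat.div_eq_of_lt hr, Nat.zero_add]
      rw [this]
  rw [Finset.sum_congr rfl step, ← Finset.mul_sum, sum_range_mul_aux]
  have step2 : ∀ z ∈ Finset.range (b ^ e), ∑ r ∈ Finset.range ((b ^ h) ^ n),
      ∏ q ∈ Finset.range n, g (((z * (b ^ h) ^ n + r) / (b ^ h) ^ q) % b ^ h) =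
      (∑ a ∈ Finset.range (b ^ h), g a) ^ n := by
    intro z _
    rw [← prod_sum_aux _ (by positivity)]
    refine Finset.sum_congr rfl fun r _ => Finset.prod_congr rfl fun q hq => ?_
    rw [Finset.mem_range] at hq
    congr 1
    obtain ⟨d, rfl⟩ : ∃ d, n = q + 1 + d := ⟨n - (q + 1), by omega⟩
    have : z * (b ^ h) ^ (q + 1 + d) + r = r + (b ^ h) ^ q * (z * (b ^ h) ^ d * b ^ h) := by ring
    rw [this, Nat.add_mul_div_left _ _ (by positivity), Nat.add_mul_mod_self_right]
  rw [Finset.sum_congr rfl step2]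
  simp [pow_add]; ring

/-- splitting of a range into residue classes -/
lemma sum_residue (f : ℕ → ℝ) (h N : ℕ) (hh : 0 < h) :
    ∑ i ∈ Finset.range N, f i =
      ∑ r ∈ Finset.range h, ∑ q ∈ Finset.range ((N + h - 1 - r) / h), f (r + h * q) := by
  rw [Finset.sum_sigma']
  have key : ∀ r < h, ∀ q, q < (N + h - 1 - r) / h ↔ r + h * q < N := by
    intro r hr q
    rw [Nat.lt_iff_add_one_le, Nat.le_div_iff_mul_le hh]
    have : (q + 1) * h = h * q + h := by ring
    omega
  refine Finset.sum_bij' (fun i _ => ⟨i % h, i / h⟩) (fun x _ => x.1 + h * x.2) ?_ ?_ ?_ ?_ ?_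
  · intro i hi
    simp only [Finset.mem_range, Finset.mem_sigma] at *
    refine ⟨Nat.mod_lt _ hh, (key _ (Nat.mod_lt _ hh) _).2 ?_⟩
    rwa [Nat.mod_add_div]
  · rintro ⟨r, q⟩ hx
    simp only [Finset.mem_range, Finset.mem_sigma] at *
    exact (key r hx.1 q).1 hx.2
  · intro i _; exact Nat.mod_add_div _ _
  · rintro ⟨r, q⟩ hx
    simp only [Finset.mem_range, Finset.mem_sigma] at *
    have h1 : (r + h * q) % h = r := by
      rw [Nat.add_mul_mod_self_left, Nat.mod_eq_of_lt hx.1]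
    have h2 : (r + h * q) / h = q := by
      rw [Nat.add_mul_div_left _ _ hh, Nat.div_eq_of_lt hx.1, Nat.zero_add]
    rw [h1, h2]
  · intro i _; simp only [Nat.mod_add_div]

/-- one-step moment generating function -/
lemma mgf_one (B a : ℕ) (ha : a < B) (θ : ℝ) (hθ : |θ| ≤ 1) :
    ∑ c ∈ Finset.range B, Real.exp (θ * ((if c = a then 1 else 0) - 1 / (B : ℝ))) ≤
      B * Real.exp (θ ^ 2 / B) := by
  have hB : (0 : ℝ) < B := by exact_mod_cast (by omega : 0 < B)
  have e1 : ∀ c ∈ Finset.range B,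
      Real.exp (θ * ((if c = a then 1 else 0) - 1 / (B : ℝ))) =
      Real.exp (-(θ / B)) * (1 + if c = a then Real.exp θ - 1 else 0) := by
    intro c _
    split_ifs
    · rw [show (1 : ℝ) + (Real.exp θ - 1) = Real.exp θ by ring, ← Real.exp_add]; congr 1; ring
    · rw [add_zero, mul_one]; congr 1; ring
  rw [Finset.sum_congr rfl e1, ← Finset.mul_sum, Finset.sum_add_distrib]
  simp only [Finset.sum_const, Finset.card_range, nsmul_eq_mul, mul_one, Finset.sum_ite_eq',
    Finset.mem_range, ha, if_true]
  have h2 := Real.abs_exp_sub_one_sub_id_le hθ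
  have h3 : Real.exp θ - 1 ≤ θ + θ ^ 2 := by linarith [(abs_le.1 h2).2]
  have h4 : 1 + (Real.exp θ - 1) / B ≤ Real.exp ((θ + θ ^ 2) / B) := by
    have := Real.add_one_le_exp ((θ + θ ^ 2) / B)
    have : (Real.exp θ - 1) / B ≤ (θ + θ ^ 2) / B := by gcongr
    linarith
  calc Real.exp (-(θ / B)) * (B + (Real.exp θ - 1))
      = B * (Real.exp (-(θ / B)) * (1 + (Real.exp θ - 1) / B)) := by field_simp
    _ ≤ B * (Real.exp (-(θ / B)) * Real.exp ((θ + θ ^ 2) / B)) := by gcongr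
    _ = B * Real.exp (θ ^ 2 / B) := by
      rw [← Real.exp_add]; congr 2; ring

/-- centred window count -/
noncomputable def cw (b h a N y : ℕ) : ℝ :=
  ∑ i ∈ Finset.range N, ((if (y / b ^ (1 + i)) % b ^ h = a then (1 : ℝ) else 0) - 1 / (b ^ h : ℕ))

lemma mgf (b h a N : ℕ) (hb : 0 < b) (hh : 0 < h) (ha : a < b ^ h) (lam : ℝ)
    (hl : |lam| * h ≤ 1) :
    ∑ y ∈ Finset.range (b ^ (N + h)), Real.exp (lam * cw b h a N y) ≤
      (b : ℝ) ^ (N + h) * Real.exp (h * lam ^ 2 * (N + h) / (b ^ h : ℕ)) := by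
  have hh' : (0 : ℝ) < h := by exact_mod_cast hh
  have hbh : (0 : ℝ) < (b ^ h : ℕ) := by positivity
  set W : ℕ → ℕ → ℝ := fun y i =>
    ((if (y / b ^ (1 + i)) % b ^ h = a then (1 : ℝ) else 0) - 1 / (b ^ h : ℕ)) with hW
  set n : ℕ → ℕ := fun r => (N + h - 1 - r) / h with hn
  have jensen : ∀ y, Real.exp (lam * cw b h a N y) ≤
      ∑ r ∈ Finset.range h, (1 / (h : ℝ)) *
        Real.exp ((h * lam) * ∑ q ∈ Finset.range (n r), W y (r + h * q)) := by
    intro y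
    have h1 : lam * cw b h a N y = ∑ r ∈ Finset.range h, (1 / (h : ℝ)) •
        ((h * lam) * ∑ q ∈ Finset.range (n r), W y (r + h * q)) := by
      rw [cw, sum_residue _ h N hh, Finset.mul_sum]
      refine Finset.sum_congr rfl fun r _ => ?_
      have aux : ∀ S : ℝ, lam * S = 1 / (h : ℝ) * (h * lam * S) := by intro S; field_simp
      exact aux _
    rw [h1]
    have := convexOn_exp.map_sum_le (t := Finset.range h) (w := fun _ => 1 / (h : ℝ))
      (p := fun r => (h * lam) * ∑ q ∈ Finset.range (n r), W y (r + h * q))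
      (fun _ _ => by positivity) (by simp; field_simp) (fun _ _ => Set.mem_univ _)
    simpa only [smul_eq_mul] using this
  have cls : ∀ r ∈ Finset.range h, ∑ y ∈ Finset.range (b ^ (N + h)),
      Real.exp ((h * lam) * ∑ q ∈ Finset.range (n r), W y (r + h * q)) ≤
      (b : ℝ) ^ (N + h) * Real.exp (h * lam ^ 2 * (N + h) / (b ^ h : ℕ)) := by
    intro r hr
    rw [Finset.mem_range] at hr
    have hnr : h * n r ≤ N + h - 1 - r := Nat.mul_div_le _ _
    obtain ⟨e, he⟩ : ∃ e, N + h = (1 + r) + h * n r + e :=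
      ⟨N + h - ((1 + r) + h * n r), by omega⟩
    have e1 : ∀ y ∈ Finset.range (b ^ (N + h)),
        Real.exp ((h * lam) * ∑ q ∈ Finset.range (n r), W y (r + h * q)) =
        ∏ q ∈ Finset.range (n r), (fun c : ℕ => Real.exp ((h * lam) *
          ((if c = a then (1 : ℝ) else 0) - 1 / (b ^ h : ℕ)))) ((y / b ^ ((1 + r) + h * q)) % b ^ h) := by
      intro y _
      rw [Finset.mul_sum, Real.exp_sum]
      refine Finset.prod_congr rfl fun q _ => ?_
      simp only [hW, add_assoc]
    rw [Finset.sum_congr rfl e1, he, prod_sum_off b h (1 + r) (n r) e hb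
      (fun c : ℕ => Real.exp ((h * lam) * ((if c = a then (1 : ℝ) else 0) - 1 / (b ^ h : ℕ))))]
    have hθ : |h * lam| ≤ 1 := by rw [abs_mul, abs_of_pos hh']; linarith
    have m1 := mgf_one (b ^ h) a ha (h * lam) hθ
    have hnr' : (h : ℝ) * n r ≤ N + h := by
      have : h * n r ≤ N + h := by omega
      exact_mod_cast this
    calc (b : ℝ) ^ (1 + r + e) * (∑ c ∈ Finset.range (b ^ h), Real.exp ((h * lam) *
          ((if c = a then (1 : ℝ) else 0) - 1 / (b ^ h : ℕ)))) ^ n r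
        ≤ (b : ℝ) ^ (1 + r + e) * ((b ^ h : ℕ) * Real.exp ((h * lam) ^ 2 / (b ^ h : ℕ))) ^ n r :=
          mul_le_mul_of_nonneg_left (pow_le_pow_left₀
            (Finset.sum_nonneg fun _ _ => (Real.exp_pos _).le) m1 _) (by positivity)
      _ = (b : ℝ) ^ (1 + r + h * n r + e) * Real.exp (n r * ((h * lam) ^ 2 / (b ^ h : ℕ))) := by
          rw [mul_pow, ← Real.exp_nat_mul]; push_cast; ring
      _ ≤ _ := by
          refine mul_le_mul_of_nonneg_left (Real.exp_le_exp.2 ?_) (by positivity)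
          calc n r * ((h * lam) ^ 2 / (b ^ h : ℕ))
              = h * lam ^ 2 * (h * n r) / (b ^ h : ℕ) := by ring
            _ ≤ _ := by gcongr
  calc ∑ y ∈ Finset.range (b ^ (N + h)), Real.exp (lam * cw b h a N y)
      ≤ ∑ y ∈ Finset.range (b ^ (N + h)), ∑ r ∈ Finset.range h, (1 / (h : ℝ)) *
        Real.exp ((h * lam) * ∑ q ∈ Finset.range (n r), W y (r + h * q)) :=
        Finset.sum_le_sum fun y _ => jensen y
    _ = ∑ r ∈ Finset.range h, (1 / (h : ℝ)) * ∑ y ∈ Finset.range (b ^ (N + h)),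
        Real.exp ((h * lam) * ∑ q ∈ Finset.range (n r), W y (r + h * q)) := by
        rw [Finset.sum_comm]; simp only [Finset.mul_sum]
    _ ≤ ∑ r ∈ Finset.range h, (1 / (h : ℝ)) *
        ((b : ℝ) ^ (N + h) * Real.exp (h * lam ^ 2 * (N + h) / (b ^ h : ℕ))) :=
        Finset.sum_le_sum fun r hr => by
          have := cls r hr
          gcongr
    _ = _ := by simp; field_simp

lemma tail (b h a N : ℕ) (hb : 0 < b) (hh : 0 < h) (ha : a < b ^ h) (hN : 100 * h ≤ N)
    (t K : ℝ) (ht : 0 < t) (h1 : 4.04 * h * N * K ≤ t ^ 2 * (b : ℝ) ^ h)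
    (h2 : 2 * h * K ≤ t) :
    (((Finset.range (b ^ (N + h))).filter fun y => t < |cw b h a N y|).card : ℝ) ≤
      2 * (b : ℝ) ^ (N + h) * Real.exp (-K) := by
  have hh' : (0 : ℝ) < h := by exact_mod_cast hh
  have hN' : (100 : ℝ) * h ≤ N := by exact_mod_cast hN
  have hNp : (0 : ℝ) < N := by linarith
  have hbp : (0 : ℝ) < b := by exact_mod_cast hb
  have hB : (0 : ℝ) < (b : ℝ) ^ h := by positivity
  -- choice of lam
  obtain ⟨lam, hl0, hl1, hl2⟩ : ∃ lam : ℝ, 0 < lam ∧ lam * h ≤ 1 ∧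
      h * lam ^ 2 * (1.01 * N) / (b : ℝ) ^ h - lam * t ≤ -K := by
    by_cases hc : t * (b : ℝ) ^ h ≤ 2.02 * N
    · refine ⟨t * (b : ℝ) ^ h / (2.02 * h * N), by positivity, ?_, ?_⟩
      · rw [div_mul_eq_mul_div, div_le_one (by positivity)]
        nlinarith
      · have : h * (t * (b : ℝ) ^ h / (2.02 * h * N)) ^ 2 * (1.01 * N) / (b : ℝ) ^ h -
            t * (b : ℝ) ^ h / (2.02 * h * N) * t = -(t ^ 2 * (b : ℝ) ^ h / (4.04 * h * N)) := by
          field_simp; norm_num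
        rw [this, neg_le_neg_iff, le_div_iff₀ (by positivity)]
        linarith
    · push Not at hc
      refine ⟨1 / h, by positivity, by field_simp; rfl, ?_⟩
      have e1 : h * (1 / (h : ℝ)) ^ 2 * (1.01 * N) / (b : ℝ) ^ h - 1 / h * t =
          (1.01 * N / (b : ℝ) ^ h - t) / h := by field_simp
      rw [e1, div_le_iff₀ hh']
      have : 1.01 * N / (b : ℝ) ^ h ≤ t / 2 := by
        rw [div_le_iff₀ hB]; linarith
      linarith
  have hexp : Real.exp (h * lam ^ 2 * (N + h) / (b ^ h : ℕ)) ≤ Real.exp (lam * t - K) := by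
    apply Real.exp_le_exp.2
    have : h * lam ^ 2 * (N + h) / ((b ^ h : ℕ) : ℝ) ≤ h * lam ^ 2 * (1.01 * N) / (b : ℝ) ^ h := by
      push_cast; gcongr; linarith
    linarith
  have m1 := mgf b h a N hb hh ha lam (by rw [abs_of_pos hl0]; exact hl1)
  have m2 := mgf b h a N hb hh ha (-lam) (by rw [abs_neg, abs_of_pos hl0]; exact hl1)
  rw [neg_sq] at m2
  have hpt : ∀ y, (if t < |cw b h a N y| then (1 : ℝ) else 0) ≤
      Real.exp (-(lam * t)) * (Real.exp (lam * cw b h a N y) + Real.exp (-lam * cw b h a N y)) := by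
    intro y
    split_ifs with hy
    · rw [mul_add, ← Real.exp_add, ← Real.exp_add]
      rcases lt_abs.1 hy with hy | hy
      · have : 1 ≤ Real.exp (-(lam * t) + lam * cw b h a N y) := by
          apply Real.one_le_exp; nlinarith
        linarith [Real.exp_pos (-(lam * t) + -lam * cw b h a N y)]
      · have : 1 ≤ Real.exp (-(lam * t) + -lam * cw b h a N y) := by
          apply Real.one_le_exp; nlinarith
        linarith [Real.exp_pos (-(lam * t) + lam * cw b h a N y)]
    · positivity
  rw [Finset.card_filter]
  push_cast
  calc (∑ y ∈ Finset.range (b ^ (N + h)), if t < |cw b h a N y| then (1 : ℝ) else 0)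
      ≤ ∑ y ∈ Finset.range (b ^ (N + h)), Real.exp (-(lam * t)) *
        (Real.exp (lam * cw b h a N y) + Real.exp (-lam * cw b h a N y)) :=
        Finset.sum_le_sum fun y _ => hpt y
    _ = Real.exp (-(lam * t)) * (∑ y ∈ Finset.range (b ^ (N + h)), Real.exp (lam * cw b h a N y) +
        ∑ y ∈ Finset.range (b ^ (N + h)), Real.exp (-lam * cw b h a N y)) := by
        rw [← Finset.mul_sum, Finset.sum_add_distrib]
    _ ≤ Real.exp (-(lam * t)) * ((b : ℝ) ^ (N + h) * Real.exp (lam * t - K) +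
        (b : ℝ) ^ (N + h) * Real.exp (lam * t - K)) := by
        gcongr
        · exact m1.trans (by gcongr)
        · exact m2.trans (by gcongr)
    _ = 2 * (b : ℝ) ^ (N + h) * (Real.exp (-(lam * t)) * Real.exp (lam * t - K)) := by ring
    _ = _ := by rw [← Real.exp_add]; congr 2; ring

lemma window (b h j R a : ℕ) (hb : 0 < b) (hR : j + h ≤ R) (x : ℝ) (hx : 0 ≤ x) :
    ((a : ℝ) / (b : ℝ) ^ h ≤ Int.fract ((b : ℝ) ^ j * x) ∧
      Int.fract ((b : ℝ) ^ j * x) < ((a : ℝ) + 1) / (b : ℝ) ^ h) ↔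
    (⌊(b : ℝ) ^ R * x⌋₊ / b ^ (R - j - h)) % b ^ h = a := by
  have hbp : (0 : ℝ) < b := by exact_mod_cast hb
  have hB : (0 : ℝ) < (b : ℝ) ^ h := by positivity
  set z : ℝ := (b : ℝ) ^ j * x with hz
  have hz0 : 0 ≤ z := by positivity
  have e1 : ⌊(b : ℝ) ^ R * x⌋₊ / b ^ (R - j - h) = ⌊(b : ℝ) ^ h * z⌋₊ := by
    rw [← Nat.floor_div_natCast]
    congr 1
    obtain ⟨d, rfl⟩ : ∃ d, R = j + h + d := ⟨R - (j + h), by omega⟩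
    have : j + h + d - j - h = d := by omega
    rw [this, hz]; push_cast; rw [div_eq_iff (by positivity)]; ring
  have hf0 := Int.fract_nonneg z
  have hf1 := Int.fract_lt_one z
  have e2 : ⌊(b : ℝ) ^ h * z⌋₊ = ⌊(b : ℝ) ^ h * Int.fract z⌋₊ + b ^ h * ⌊z⌋₊ := by
    rw [← Nat.floor_add_natCast (by positivity)]
    congr 1
    have h1 : z = Int.fract z + (⌊z⌋₊ : ℝ) := by
      have h2 : ((⌊z⌋₊ : ℕ) : ℝ) = ((⌊z⌋ : ℤ) : ℝ) := by
        exact natCast_floor_eq_intCast_floor hz0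
      rw [h2]; exact (Int.fract_add_floor z).symm
    conv_lhs => rw [h1]
    push_cast; ring
  have e3 : ⌊(b : ℝ) ^ h * Int.fract z⌋₊ < b ^ h := by
    rw [Nat.floor_lt (by positivity)]
    push_cast
    nlinarith
  rw [e1, e2, Nat.add_mul_mod_self_left, Nat.mod_eq_of_lt e3,
    Nat.floor_eq_iff (by positivity), div_le_iff₀ hB, lt_div_iff₀ hB]
  simp only [mul_comm]

lemma cw_mod (b h a N y : ℕ) (hb : 0 < b) : cw b h a N (y % b ^ (N + h)) = cw b h a N y := by
  unfold cw
  refine Finset.sum_congr rfl fun i hi => ?_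
  rw [Finset.mem_range] at hi
  have : (y % b ^ (N + h)) / b ^ (1 + i) % b ^ h = y / b ^ (1 + i) % b ^ h := by
    conv_rhs => rw [← Nat.mod_add_div y (b ^ (N + h))]
    obtain ⟨d, rfl⟩ : ∃ d, N = i + 1 + d := ⟨N - (i + 1), by omega⟩
    have e : b ^ (i + 1 + d + h) * (y / b ^ (i + 1 + d + h)) =
      b ^ (1 + i) * (b ^ h * (b ^ d * (y / b ^ (i + 1 + d + h)))) := by
      rw [← mul_assoc, ← mul_assoc, ← pow_add, ← pow_add]; congr 2; ring
    rw [e, Nat.add_mul_div_left _ _ (by positivity), Nat.add_mul_mod_self_left]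
  rw [this]

lemma F_eq (b h a M N : ℕ) (hb : 0 < b) (x : ℝ) (hx : 0 ≤ x) :
    F M N ((a : ℝ) / (b : ℝ) ^ h) (((a : ℝ) + 1) / (b : ℝ) ^ h) (bseq b x) =
      |cw b h a N (⌊(b : ℝ) ^ (M + N + h) * x⌋₊)| := by
  have hbp : (0 : ℝ) < b := by exact_mod_cast hb
  unfold F cw
  congr 1
  rw [Finset.sum_sub_distrib, Finset.card_filter]
  congr 1
  · push_cast
    rw [Finset.sum_Ico_eq_sum_range, Nat.add_sub_cancel_left]
    rw [← Finset.sum_range_reflect (fun i => if ⌊(b : ℝ) ^ (M + N + h) * x⌋₊ / b ^ (1 + i) % b ^ h = a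
      then (1 : ℝ) else 0)]
    refine Finset.sum_congr rfl fun i hi => ?_
    rw [Finset.mem_range] at hi
    have w := window b h (M + i) (M + N + h) a hb (by omega) x hx
    have e : M + N + h - (M + i) - h = 1 + (N - 1 - i) := by omega
    rw [e] at w
    unfold bseq
    simp only [w]
  · simp
    field_simp
    ring

lemma card_real_interval (S : Finset ℕ) (α β : ℝ) (h0 : 0 ≤ β - α + 1)
    (hS : ∀ s ∈ S, α ≤ s ∧ (s : ℝ) ≤ β) : (S.card : ℝ) ≤ β - α + 1 := by
  rcases S.eq_empty_or_nonempty with rfl | hne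
  · simpa using h0
  · have hsub : S ⊆ Finset.Icc (S.min' hne) (S.max' hne) := fun s hs =>
      Finset.mem_Icc.2 ⟨S.min'_le s hs, S.le_max' s hs⟩
    have h1 := Finset.card_le_card hsub
    rw [Nat.card_Icc] at h1
    have h2 := (hS _ (S.min'_mem hne)).1
    have h3 := (hS _ (S.max'_mem hne)).2
    have h4 : S.min' hne ≤ S.max' hne := S.min'_le _ (S.max'_mem hne)
    have h5 : S.card + S.min' hne ≤ S.max' hne + 1 := by omega
    have h6 : (S.card : ℝ) + (S.min' hne : ℕ) ≤ (S.max' hne : ℕ) + 1 := by exact_mod_cast h5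
    linarith

lemma count (b h a M N : ℕ) (hb : 0 < b) (hh : 0 < h) (ha : a < b ^ h) (hN : 100 * h ≤ N)
    (t K : ℝ) (ht : 0 < t) (h1 : 4.04 * h * N * K ≤ t ^ 2 * (b : ℝ) ^ h)
    (h2 : 2 * h * K ≤ t) (δ u v : ℝ) (hδ : 0 < δ) (hu : 0 ≤ u)
    (hδ2 : 2 * δ * (b : ℝ) ^ (M + N + h) ≤ 1) (hw : 2 ≤ (b : ℝ) ^ M * (v - u))
    (S : Finset ℕ) (hS : ∀ A ∈ S, ∃ x : ℝ, A * δ ≤ x ∧ x < (A + 1) * δ ∧ u ≤ x ∧ x ≤ v ∧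
      t < F M N ((a : ℝ) / (b : ℝ) ^ h) (((a : ℝ) + 1) / (b : ℝ) ^ h) (bseq b x)) :
    (S.card : ℝ) ≤ 8 * ((v - u) / δ) * Real.exp (-K) := by
  have hbp : (0 : ℝ) < b := by exact_mod_cast hb
  choose! X hX1 hX2 hX3 hX4 hX5 using hS
  set R := M + N + h with hR
  set f : ℕ → ℕ := fun A => ⌊(b : ℝ) ^ R * X A⌋₊ with hf
  set Y := S.image f with hY
  have hbR : (0 : ℝ) < (b : ℝ) ^ R := by positivity
  have hbM : (0 : ℝ) < (b : ℝ) ^ M := by positivity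
  -- fibres
  have fib : ∀ y ∈ Y, ((S.filter fun A => f A = y).card : ℝ) ≤ 2 / ((b : ℝ) ^ R * δ) := by
    intro y _
    have hone : 2 ≤ 1 / ((b : ℝ) ^ R * δ) := by
      rw [le_div_iff₀ (by positivity)]; linarith
    have := card_real_interval (S.filter fun A => f A = y) (y / ((b : ℝ) ^ R * δ) - 1)
      ((y + 1) / ((b : ℝ) ^ R * δ)) (by rw [add_div]; linarith) (by
        intro A hA
        rw [Finset.mem_filter] at hA
        obtain ⟨hA, hAy⟩ := hA
        have hx0 : 0 ≤ X A := hu.trans (hX3 A hA)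
        rw [hf, Nat.floor_eq_iff (by positivity)] at hAy
        have q1 := hX1 A hA
        have q2 := hX2 A hA
        constructor
        · rw [sub_le_iff_le_add, div_le_iff₀ (by positivity)]
          calc (y : ℝ) ≤ (b : ℝ) ^ R * X A := hAy.1
            _ ≤ (b : ℝ) ^ R * ((A + 1) * δ) := by gcongr
            _ = _ := by ring
        · rw [le_div_iff₀ (by positivity)]
          calc (A : ℝ) * ((b : ℝ) ^ R * δ) = (b : ℝ) ^ R * (A * δ) := by ring
            _ ≤ (b : ℝ) ^ R * X A := by gcongr
            _ ≤ _ := hAy.2.le)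
    have e : (y + 1) / ((b : ℝ) ^ R * δ) - (y / ((b : ℝ) ^ R * δ) - 1) + 1 =
      1 / ((b : ℝ) ^ R * δ) + 2 := by ring
    rw [e] at this
    have e2 : 2 / ((b : ℝ) ^ R * δ) = 1 / ((b : ℝ) ^ R * δ) + 1 / ((b : ℝ) ^ R * δ) := by ring
    rw [e2]; linarith
  have cS : (S.card : ℝ) ≤ Y.card * (2 / ((b : ℝ) ^ R * δ)) := by
    rw [Finset.card_eq_sum_card_image f S]
    push_cast
    calc _ ≤ ∑ y ∈ Y, 2 / ((b : ℝ) ^ R * δ) := Finset.sum_le_sum fib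
      _ = _ := by simp
  -- top parts
  set C := Y.image (fun y => y / b ^ (N + h)) with hC
  have cC : (C.card : ℝ) ≤ 2 * ((b : ℝ) ^ M * (v - u)) := by
    have := card_real_interval C ((b : ℝ) ^ M * u - 1) ((b : ℝ) ^ M * v) (by linarith) (by
      intro c hc
      rw [hC, Finset.mem_image] at hc
      obtain ⟨y, hy, rfl⟩ := hc
      rw [hY, Finset.mem_image] at hy
      obtain ⟨A, hA, rfl⟩ := hy
      have hx0 : 0 ≤ X A := hu.trans (hX3 A hA)
      have e : f A / b ^ (N + h) = ⌊(b : ℝ) ^ M * X A⌋₊ := by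
        rw [hf]
        simp only
        rw [← Nat.floor_div_natCast]
        congr 1
        rw [hR, add_assoc, pow_add]; push_cast; field_simp
      rw [e]
      have q1 := hX3 A hA
      have q2 := hX4 A hA
      constructor
      · have := Nat.lt_floor_add_one ((b : ℝ) ^ M * X A)
        have : (b : ℝ) ^ M * u ≤ (b : ℝ) ^ M * X A := by gcongr
        linarith
      · exact (Nat.floor_le (by positivity)).trans (by gcongr))
    have e : (b : ℝ) ^ M * v - ((b : ℝ) ^ M * u - 1) + 1 = (b : ℝ) ^ M * (v - u) + 2 := by ring
    rw [e] at this
    linarith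
  set D := (Finset.range (b ^ (N + h))).filter fun y => t < |cw b h a N y| with hD
  have cD : (D.card : ℝ) ≤ 2 * (b : ℝ) ^ (N + h) * Real.exp (-K) :=
    tail b h a N hb hh ha hN t K ht h1 h2
  have cY : (Y.card : ℝ) ≤ C.card * D.card := by
    have : Y.card ≤ (C ×ˢ D).card := by
      refine Finset.card_le_card_of_injOn (fun y => (y / b ^ (N + h), y % b ^ (N + h))) ?_ ?_
      · intro y hy
        have hy' : y ∈ Y := hy
        simp only [Finset.coe_product, Set.mem_prod, Finset.mem_coe]
        refine ⟨Finset.mem_image_of_mem _ hy', ?_⟩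
        rw [hD, Finset.mem_filter, Finset.mem_range]
        refine ⟨Nat.mod_lt _ (by positivity), ?_⟩
        rw [cw_mod _ _ _ _ _ hb]
        rw [hY, Finset.mem_image] at hy'
        obtain ⟨A, hA, rfl⟩ := hy'
        have q := hX5 A hA
        rwa [F_eq b h a M N hb (X A) (hu.trans (hX3 A hA))] at q
      · intro y _ y' _ hyy
        simp only [Prod.mk.injEq] at hyy
        rw [← Nat.mod_add_div y (b ^ (N + h)), ← Nat.mod_add_div y' (b ^ (N + h)), hyy.1, hyy.2]
    rw [Finset.card_product] at this
    exact_mod_cast this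
  have hw0 : 0 ≤ (b : ℝ) ^ M * (v - u) := by linarith
  calc (S.card : ℝ) ≤ Y.card * (2 / ((b : ℝ) ^ R * δ)) := cS
    _ ≤ ((2 * ((b : ℝ) ^ M * (v - u))) * (2 * (b : ℝ) ^ (N + h) * Real.exp (-K))) *
        (2 / ((b : ℝ) ^ R * δ)) := by
        gcongr
        exact cY.trans (by gcongr)
    _ = _ := by
        rw [hR, add_assoc, pow_add]
        field_simp
        ring

lemma poly5_le (k : ℕ) (hk : 100 ≤ k) : (2 * k) ^ 5 ≤ 2 ^ k := by
  induction k, hk using Nat.le_induction with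
  | base => norm_num
  | succ k hk ih =>
    rw [pow_succ 2 k]
    refine le_trans ?_ (Nat.mul_le_mul_right 2 ih)
    have h1 : (100 * (2 * (k + 1))) ^ 5 ≤ (101 * (2 * k)) ^ 5 := Nat.pow_le_pow_left (by omega) 5
    rw [mul_pow, mul_pow 101] at h1
    omega

lemma poly8_le (l : ℕ) (hl : 40 ≤ l) : 9 * (l + 1) ^ 8 ≤ 529 * 2 ^ (l - 1) := by
  induction l, hl using Nat.le_induction with
  | base => norm_num
  | succ k hk ih =>
    have e : 2 ^ (k + 1 - 1) = 2 * 2 ^ (k - 1) := by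
      rw [← pow_succ']; congr 1; omega
    rw [e]
    have h1 : (41 * (k + 1 + 1)) ^ 8 ≤ (42 * (k + 1)) ^ 8 := Nat.pow_le_pow_left (by omega) 8
    rw [mul_pow, mul_pow 42] at h1
    generalize (k + 1 + 1) ^ 8 = X at *
    generalize (k + 1) ^ 8 = Y at *
    generalize 2 ^ (k - 1) = Z at *
    norm_num at h1
    omega

lemma lin_le (l : ℕ) (hl : 40 ≤ l) : 100 * (l + 1) ≤ 2 ^ (l - 1) := by
  induction l, hl using Nat.le_induction with
  | base => norm_num
  | succ k hk ih =>
    have e : 2 ^ (k + 1 - 1) = 2 * 2 ^ (k - 1) := by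
      rw [← pow_succ']; congr 1; omega
    rw [e]; omega

lemma log2_lt : Real.log 2 < 0.6932 := by linarith [Real.log_two_lt_d9]
lemma log2_gt : 0.693 < Real.log 2 := by linarith [Real.log_two_gt_d9]

lemma numA_step (k : ℕ) (hk : 9 ≤ k) :
    (k + 1) ^ 4 * (208 * (k + 1) + 1000) ≤ 2 * (k ^ 4 * (208 * k + 1000)) := by
  have h1 : (9 * (k + 1)) ^ 4 ≤ (10 * k) ^ 4 := Nat.pow_le_pow_left (by omega) 4
  have h2 : 12 * (208 * (k + 1) + 1000) ≤ 13 * (208 * k + 1000) := by linarith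
  have h3 := Nat.mul_le_mul h1 h2
  rw [mul_pow, mul_pow 10] at h3
  have e1 : 9 ^ 4 * (k + 1) ^ 4 * (12 * (208 * (k + 1) + 1000)) =
    78732 * ((k + 1) ^ 4 * (208 * (k + 1) + 1000)) := by ring
  have e2 : 10 ^ 4 * k ^ 4 * (13 * (208 * k + 1000)) =
    130000 * (k ^ 4 * (208 * k + 1000)) := by ring
  have aux : ∀ X Y : ℕ, 78732 * X ≤ 130000 * Y → X ≤ 2 * Y := by intro X Y h; omega
  exact aux _ _ (e1.symm.le.trans (h3.trans e2.le))

lemma numA_two (h : ℕ) (hh : 1 ≤ h) : h ^ 4 * (208 * h + 1000) ≤ 52000 * 2 ^ h := by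
  rcases lt_or_ge h 9 with h9 | h9
  · interval_cases h <;> norm_num
  · clear hh
    induction h, h9 using Nat.le_induction with
    | base => norm_num
    | succ k hk ih =>
      have h4 := Nat.mul_le_mul_left 2 ih
      refine (numA_step k hk).trans (h4.trans (le_of_eq ?_))
      rw [pow_succ, ← mul_assoc, mul_comm 2, mul_assoc, mul_comm 2, ← mul_assoc]

lemma numA (b h : ℕ) (hb : 2 ≤ b) (hh : 1 ≤ h) :
    (h : ℝ) ^ 4 * (3 * (h * Real.log b) + 10) ≤ 520 * (b : ℝ) ^ h := by
  have hb' : (2 : ℝ) ≤ b := by exact_mod_cast hb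
  have h1 : (h : ℝ) ^ 4 * (208 * h + 1000) ≤ 52000 * 2 ^ h := by exact_mod_cast numA_two h hh
  set x := Real.log (b / 2) with hx
  have hx0 : 0 ≤ x := Real.log_nonneg (by linarith)
  have e1 : Real.log b = Real.log 2 + x := by
    rw [hx, Real.log_div (by linarith) (by norm_num)]; ring
  have e2 : (b : ℝ) ^ h = 2 ^ h * (b / 2) ^ h := by rw [← mul_pow]; congr 1; ring
  have e3 : 1 + h * x ≤ ((b : ℝ) / 2) ^ h := by
    have h3 : ((b : ℝ) / 2) ^ h = Real.exp (h * x) := by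
      rw [Real.exp_nat_mul, hx, Real.exp_log (by linarith)]
    rw [h3]; linarith [Real.add_one_le_exp (h * x)]
  have hl := log2_lt
  have hh0 : (0 : ℝ) ≤ h := by positivity
  have hhx : 0 ≤ h * x := by positivity
  have e4 : 3 * (h * Real.log b) + 10 ≤ (2.08 * h + 10) * (1 + h * x) := by
    rw [e1]
    nlinarith [mul_nonneg hh0 hhx]
  calc (h : ℝ) ^ 4 * (3 * (h * Real.log b) + 10)
      ≤ (h : ℝ) ^ 4 * ((2.08 * h + 10) * (1 + h * x)) := by gcongr
    _ = ((h : ℝ) ^ 4 * (208 * h + 1000) / 100) * (1 + h * x) := by ring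
    _ ≤ (52000 * 2 ^ h / 100) * (b / 2) ^ h := by gcongr
    _ = 520 * (b : ℝ) ^ h := by rw [e2]; ring

lemma logk (k : ℕ) (hk : 100 ≤ k) : Real.log k ≤ k / 20 := by
  have hk' : (100 : ℝ) ≤ k := by exact_mod_cast hk
  have h1 : Real.log k = Real.log 100 + Real.log (k / 100) := by
    rw [Real.log_div (by linarith) (by norm_num)]; ring
  have h2 : Real.log (k / 100) ≤ k / 100 - 1 := Real.log_le_sub_one_of_pos (by linarith)
  have h3 : Real.log 100 ≤ 7 * Real.log 2 := by
    rw [show (7 : ℝ) * Real.log 2 = Real.log (2 ^ 7) by rw [Real.log_pow]; norm_num]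
    exact Real.log_le_log (by norm_num) (by norm_num)
  have := log2_lt
  linarith

lemma logb_pos (b : ℕ) (hb : 2 ≤ b) : 0 < Real.log b :=
  Real.log_pos (by exact_mod_cast (by omega : 1 < b))

lemma log2_le_logb (b : ℕ) (hb : 2 ≤ b) : Real.log 2 ≤ Real.log b :=
  Real.log_le_log (by norm_num) (by exact_mod_cast hb)

lemma N1 (b k : ℕ) (hb : 2 ≤ b) : (2 : ℝ) ^ (2 ^ k) ≤ (b : ℝ) ^ Nkb b k := by
  have hb0 : (0 : ℝ) < b := by exact_mod_cast (by omega : 0 < b)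
  have hl := logb_pos b hb
  rw [← Real.log_le_log_iff (by positivity) (by positivity), Real.log_pow, Real.log_pow]
  have := Nat.le_ceil ((2 : ℝ) ^ k * Real.log 2 / Real.log b)
  rw [div_le_iff₀ hl] at this
  push_cast
  exact this

lemma N2 (b k : ℕ) (hb : 2 ≤ b) : (b : ℝ) ^ Nkb b k ≤ b * (2 : ℝ) ^ (2 ^ k) := by
  have hb0 : (0 : ℝ) < b := by exact_mod_cast (by omega : 0 < b)
  have hl := logb_pos b hb
  rw [← Real.log_le_log_iff (by positivity) (by positivity), Real.log_mul (by positivity)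
    (by positivity), Real.log_pow, Real.log_pow]
  have h0 : 0 ≤ (2 : ℝ) ^ k * Real.log 2 / Real.log b := by
    have := Real.log_nonneg (by norm_num : (1 : ℝ) ≤ 2)
    positivity
  have := Nat.ceil_lt_add_one h0
  have h2 : ((Nkb b k : ℕ) : ℝ) * Real.log b ≤
      ((2 : ℝ) ^ k * Real.log 2 / Real.log b + 1) * Real.log b := by
    gcongr; exact this.le
  rw [add_mul, div_mul_cancel₀ _ hl.ne'] at h2
  push_cast
  linarith

lemma D_bounds (b k : ℕ) (hk : 100 ≤ k) (hb : 2 ≤ b) (hbk : b ≤ k) :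
    (2 : ℝ) ^ k ≤ ((Nkb b (k + 1) : ℝ) - Nkb b k - 4 * k) * (2 * k) ∧
    ((Nkb b (k + 1) : ℝ) - Nkb b k - 4 * k) ≤ 2 ^ k := by
  have hl := logb_pos b hb
  have hl2 : 0 < Real.log 2 := Real.log_pos (by norm_num)
  have hk' : (100 : ℝ) ≤ k := by exact_mod_cast hk
  have h5 : (2 * (k : ℝ)) ^ 5 ≤ 2 ^ k := by exact_mod_cast poly5_le k hk
  set L := Real.log 2 / Real.log b with hL
  have hL0 : 0 < L := by positivity
  have hL1 : L ≤ 1 := by rw [hL, div_le_one hl]; exact log2_le_logb b hb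
  have hLk : 1 ≤ L * k := by
    rw [hL, div_mul_eq_mul_div, le_div_iff₀ hl, one_mul]
    have h1 : (b : ℝ) ≤ 2 ^ k := by
      have : b < 2 ^ b := Nat.lt_two_pow_self
      have h2 : 2 ^ b ≤ 2 ^ k := Nat.pow_le_pow_right (by norm_num) hbk
      exact_mod_cast (this.le.trans h2)
    have hb0 : (0 : ℝ) < b := by exact_mod_cast (by omega : 0 < b)
    have := Real.log_le_log hb0 h1
    rw [Real.log_pow] at this
    linarith
  have e1 : ∀ j, (Nkb b j : ℝ) < 2 ^ j * L + 1 ∧ 2 ^ j * L ≤ (Nkb b j : ℝ) := by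
    intro j
    unfold Nkb
    rw [mul_div_assoc, ← hL]
    exact ⟨Nat.ceil_lt_add_one (by positivity), Nat.le_ceil _⟩
  obtain ⟨a1, a2⟩ := e1 k
  obtain ⟨a3, a4⟩ := e1 (k + 1)
  rw [pow_succ] at a3 a4
  have hp : (0 : ℝ) < 2 ^ k := by positivity
  constructor
  · have h1 : (2 : ℝ) ^ k * L - 1 - 4 * k ≤ (Nkb b (k + 1) : ℝ) - Nkb b k - 4 * k := by linarith
    refine le_trans ?_ (mul_le_mul_of_nonneg_right h1 (by linarith))
    have h2 : (2 : ℝ) ^ k ≤ 2 ^ k * (L * k) := le_mul_of_one_le_right hp.le hLk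
    have h3 : (1 + 4 * (k : ℝ)) * (2 * k) ≤ (2 * (k : ℝ)) ^ 5 := by
      have : (k : ℝ) ^ 2 * 1 ≤ (k : ℝ) ^ 2 * (k : ℝ) ^ 3 := by
        gcongr; exact one_le_pow₀ (by linarith)
      nlinarith
    nlinarith
  · have : 2 ^ k * L ≤ 2 ^ k := mul_le_of_le_one_right hp.le hL1
    linarith

lemma n_bounds (b k : ℕ) (hk : 100 ≤ k) (hb : 2 ≤ b) (hbk : b ≤ k) :
    (Nkb b (k + 1) : ℝ) - Nkb b k - 4 * k ≤ 2 ^ nkb b k ∧ nkb b k ≤ k ∧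
      4 * k ≤ 5 * nkb b k := by
  obtain ⟨d1, d2⟩ := D_bounds b k hk hb hbk
  set D := (Nkb b (k + 1) : ℝ) - Nkb b k - 4 * k with hD
  have hk' : (100 : ℝ) ≤ k := by exact_mod_cast hk
  have hp : (0 : ℝ) < 2 ^ k := by positivity
  have hD0 : 0 < D := by
    by_contra h
    push Not at h
    nlinarith
  have h1 : D ≤ 2 ^ nkb b k := by
    have h2 : Real.logb 2 D ≤ nkb b k := Nat.le_ceil _
    rw [Real.logb_le_iff_le_rpow (by norm_num) hD0, Real.rpow_natCast] at h2
    exact h2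
  refine ⟨h1, ?_, ?_⟩
  · unfold nkb
    rw [Nat.ceil_le, ← hD, Real.logb_le_iff_le_rpow (by norm_num) hD0, Real.rpow_natCast]
    exact d2
  · by_contra hc
    push Not at hc
    have h3 : (2 : ℝ) ^ k ≤ 2 ^ nkb b k * (2 * k) := d1.trans (by gcongr)
    have h4 : 2 ^ k ≤ 2 ^ nkb b k * (2 * k) := by exact_mod_cast h3
    have h5 := Nat.pow_le_pow_left h4 5
    rw [mul_pow, ← pow_mul, ← pow_mul] at h5
    have h6 : 2 ^ (nkb b k * 5) * (2 * k) ^ 5 ≤ 2 ^ (nkb b k * 5) * 2 ^ k :=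
      Nat.mul_le_mul_left _ (poly5_le k hk)
    rw [← pow_add] at h6
    have h7 := (Nat.pow_le_pow_iff_right (by norm_num : 1 < 2)).1 (h5.trans h6)
    omega

lemma T_bounds (b k h : ℕ) (hb : 2 ≤ b) (hT : h ≤ Tbk b k) :
    (h : ℝ) * Real.log b ≤ nkb b k * Real.log 2 / 2 + Real.log b ∧ 2 * (h : ℝ) ≤ nkb b k + 2 := by
  have hl := logb_pos b hb
  have hl2 : 0 < Real.log 2 := Real.log_pos (by norm_num)
  have hll := log2_le_logb b hb
  have h1 : (h : ℝ) < nkb b k * Real.log 2 / (2 * Real.log b) + 1 := by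
    refine lt_of_le_of_lt (b := ((Tbk b k : ℕ) : ℝ)) (by exact_mod_cast hT) ?_
    exact Nat.ceil_lt_add_one (by positivity)
  constructor
  · have h2 : (h : ℝ) * Real.log b ≤ (nkb b k * Real.log 2 / (2 * Real.log b) + 1) * Real.log b := by
      gcongr
    refine h2.trans (le_of_eq ?_)
    field_simp
  · have h2 : (nkb b k : ℝ) * Real.log 2 / (2 * Real.log b) ≤ nkb b k / 2 := by
      rw [div_le_div_iff₀ (by positivity) (by norm_num)]
      have : (nkb b k : ℝ) * Real.log 2 ≤ nkb b k * Real.log b := by gcongr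
      linarith
    linarith

lemma t_sq (l h : ℕ) (hl : 1 ≤ l) (hh : 1 ≤ h) (u : ℝ) (hu : 0 ≤ u) :
    (46 * (2 : ℝ) ^ (((l : ℝ) - 1) / 2) * (h : ℝ) ^ (-(3 / 2) : ℝ) * Real.sqrt u) ^ 2 * (h : ℝ) ^ 3 =
      2116 * (2 : ℝ) ^ (l - 1) * u := by
  have hh0 : (0 : ℝ) < h := by exact_mod_cast hh
  have e1 : ((2 : ℝ) ^ (((l : ℝ) - 1) / 2)) ^ 2 = (2 : ℝ) ^ (l - 1) := by
    rw [← Real.rpow_natCast, ← Real.rpow_mul (by norm_num), ← Real.rpow_natCast]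
    congr 1
    push_cast [hl]
    ring
  have e2 : ((h : ℝ) ^ (-(3 / 2) : ℝ)) ^ 2 * (h : ℝ) ^ 3 = 1 := by
    rw [← Real.rpow_natCast, ← Real.rpow_mul hh0.le, ← Real.rpow_natCast (h : ℝ) 3,
      ← Real.rpow_add hh0]
    norm_num
  have e3 := Real.sq_sqrt hu
  calc _ = 46 ^ 2 * ((2 : ℝ) ^ (((l : ℝ) - 1) / 2)) ^ 2 *
        (((h : ℝ) ^ (-(3 / 2) : ℝ)) ^ 2 * (h : ℝ) ^ 3) * (Real.sqrt u) ^ 2 := by ring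
    _ = _ := by rw [e1, e2, e3]; ring

set_option maxHeartbeats 1000000 in
lemma tuple (k b h a l m : ℕ) (hk : 100 ≤ k) (hb : 2 ≤ b) (hbk : b ≤ k) (hh : 1 ≤ h)
    (hT : h ≤ Tbk b k) (ha : a < b ^ h) (hl1 : nkb b k ≤ 2 * l) (hl2 : l ≤ nkb b k)
    (hm : Nkb b k + 4 * k + m * 2 ^ l + 2 ^ (l - 1) ≤ Nkb b (k + 1))
    (u v : ℝ) (hu : 0 ≤ u) (huv : ((2 : ℝ) ^ (2 ^ k + k))⁻¹ ≤ v - u)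
    (S : Finset ℕ) (hS : ∀ A ∈ S, ∃ x : ℝ, A * ((2 : ℝ) ^ (2 ^ (k + 1) + k))⁻¹ ≤ x ∧
      x < (A + 1) * ((2 : ℝ) ^ (2 ^ (k + 1) + k))⁻¹ ∧ u ≤ x ∧ x ≤ v ∧
      46 * (2 : ℝ) ^ (((l : ℝ) - 1) / 2) * (h : ℝ) ^ (-(3 / 2) : ℝ) *
        Real.sqrt ((nkb b k : ℝ) - l + 1) <
      F (Nkb b k + 4 * k + m * 2 ^ l) (2 ^ (l - 1))
        ((a : ℝ) / (b : ℝ) ^ h) (((a : ℝ) + 1) / (b : ℝ) ^ h) (bseq b x)) :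
    (S.card : ℝ) ≤ 8 * ((v - u) / ((2 : ℝ) ^ (2 ^ (k + 1) + k))⁻¹) *
      (((b : ℝ) ^ (3 * h))⁻¹ * ((1024 : ℝ) ^ (nkb b k - l + 1))⁻¹) := by
  obtain ⟨n1, n2, n3⟩ := n_bounds b k hk hb hbk
  obtain ⟨t1, t2⟩ := T_bounds b k h hb hT
  have hlb := logb_pos b hb
  have hb0 : (0 : ℝ) < b := by exact_mod_cast (by omega : 0 < b)
  have hk' : (100 : ℝ) ≤ k := by exact_mod_cast hk
  have hbk' : (b : ℝ) ≤ k := by exact_mod_cast hbk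
  have hh0 : (1 : ℝ) ≤ h := by exact_mod_cast hh
  have hl40 : 40 ≤ l := by omega
  have hl40' : (40 : ℝ) ≤ l := by exact_mod_cast hl40
  have hl1' : (nkb b k : ℝ) ≤ 2 * l := by exact_mod_cast hl1
  have hl2' : (l : ℝ) ≤ nkb b k := by exact_mod_cast hl2
  have n3' : 4 * (k : ℝ) ≤ 5 * nkb b k := by exact_mod_cast n3
  set w : ℝ := (nkb b k : ℝ) - l + 1 with hw
  have hw1 : 1 ≤ w := by linarith
  have hwl : w ≤ l + 1 := by linarith
  have hhl : (h : ℝ) ≤ l + 1 := by linarith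
  have hlogb : Real.log b ≤ l / 8 := by
    have : Real.log b ≤ Real.log k := Real.log_le_log hb0 hbk'
    linarith [logk k hk]
  set E : ℝ := 3 * (h * Real.log b) + 10 with hE
  have hE0 : 0 < E := by positivity
  have hEl : E ≤ 3 * l := by
    have h1 : (nkb b k : ℝ) * Real.log 2 ≤ 2 * l * 0.6932 := by
      have := log2_lt
      have : 0 < Real.log 2 := Real.log_pos (by norm_num)
      gcongr
    linarith
  set t : ℝ := 46 * (2 : ℝ) ^ (((l : ℝ) - 1) / 2) * (h : ℝ) ^ (-(3 / 2) : ℝ) * Real.sqrt w with ht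
  have ht0 : 0 < t := by positivity
  have hsq := t_sq l h (by omega) hh w (by linarith)
  rw [← ht] at hsq
  have hN0 : (0 : ℝ) < 2 ^ (l - 1) := by positivity
  have c1 : 4.04 * h * ((2 ^ (l - 1) : ℕ) : ℝ) * (w * E) ≤ t ^ 2 * (b : ℝ) ^ h := by
    have hA := numA b h hb hh
    rw [← hE] at hA
    have h3 : (0 : ℝ) < (h : ℝ) ^ 3 := by positivity
    rw [← mul_le_mul_iff_left₀ h3]
    push_cast
    calc 4.04 * h * (2 : ℝ) ^ (l - 1) * (w * E) * (h : ℝ) ^ 3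
        = (4.04 * (2 : ℝ) ^ (l - 1) * w) * ((h : ℝ) ^ 4 * E) := by ring
      _ ≤ (4.04 * (2 : ℝ) ^ (l - 1) * w) * (520 * (b : ℝ) ^ h) := by gcongr
      _ = 2100.8 * ((2 : ℝ) ^ (l - 1) * w * (b : ℝ) ^ h) := by ring
      _ ≤ 2116 * ((2 : ℝ) ^ (l - 1) * w * (b : ℝ) ^ h) := by gcongr; norm_num
      _ = (t ^ 2 * (h : ℝ) ^ 3) * (b : ℝ) ^ h := by rw [hsq]; ring
      _ = _ := by ring
  have c2 : 2 * h * (w * E) ≤ t := by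
    refine le_of_sq_le_sq ?_ ht0.le
    have h3 : (0 : ℝ) < (h : ℝ) ^ 3 := by positivity
    rw [← mul_le_mul_iff_left₀ h3, hsq]
    have p8 : 9 * ((l : ℝ) + 1) ^ 8 ≤ 529 * 2 ^ (l - 1) := by exact_mod_cast poly8_le l hl40
    calc (2 * h * (w * E)) ^ 2 * (h : ℝ) ^ 3 = 4 * w * ((h : ℝ) ^ 5 * w * E ^ 2) := by ring
      _ ≤ 4 * w * (((l : ℝ) + 1) ^ 5 * (l + 1) * (3 * (l + 1)) ^ 2) := by
          gcongr
          linarith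
      _ = 4 * w * (9 * ((l : ℝ) + 1) ^ 8) := by ring
      _ ≤ 4 * w * (529 * 2 ^ (l - 1)) := by gcongr
      _ = _ := by ring
  have c3 : 100 * h ≤ 2 ^ (l - 1) := by
    have : h ≤ l + 1 := by exact_mod_cast hhl
    exact (Nat.mul_le_mul_left 100 this).trans (lin_le l hl40)
  have c4 : 2 * ((2 : ℝ) ^ (2 ^ (k + 1) + k))⁻¹ *
      (b : ℝ) ^ (Nkb b k + 4 * k + m * 2 ^ l + 2 ^ (l - 1) + h) ≤ 1 := by
    have b1 : (1 : ℝ) ≤ b := by exact_mod_cast (by omega : 1 ≤ b)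
    have s1 : (b : ℝ) ^ (Nkb b k + 4 * k + m * 2 ^ l + 2 ^ (l - 1) + h) ≤
        (b * (2 : ℝ) ^ (2 ^ (k + 1))) * (b : ℝ) ^ h := by
      rw [pow_add _ _ h]
      gcongr
      exact (pow_le_pow_right₀ b1 hm).trans (N2 b (k + 1) hb)
    have s2 : 2 * (b : ℝ) * (b : ℝ) ^ h ≤ 2 ^ k := by
      refine le_of_sq_le_sq ?_ (by positivity)
      have s3 : ((b : ℝ) ^ h) ^ 2 ≤ (b : ℝ) ^ 2 * 2 ^ k := by
        have s4 : ((b : ℝ) ^ h) ^ 2 ≤ (b : ℝ) ^ 2 * 2 ^ nkb b k := by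
          rw [← Real.log_le_log_iff (by positivity) (by positivity), Real.log_mul (by positivity)
            (by positivity), Real.log_pow, Real.log_pow, Real.log_pow, Real.log_pow]
          push_cast
          linarith
        refine s4.trans ?_
        gcongr
        norm_num
      have h5 : (2 * (k : ℝ)) ^ 5 ≤ 2 ^ k := by exact_mod_cast poly5_le k hk
      calc (2 * (b : ℝ) * (b : ℝ) ^ h) ^ 2 = 4 * (b : ℝ) ^ 2 * ((b : ℝ) ^ h) ^ 2 := by ring
        _ ≤ 4 * (b : ℝ) ^ 2 * ((b : ℝ) ^ 2 * 2 ^ k) := by gcongr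
        _ = 4 * (b : ℝ) ^ 4 * 2 ^ k := by ring
        _ ≤ 4 * (k : ℝ) ^ 4 * 2 ^ k := by gcongr
        _ ≤ (2 * (k : ℝ)) ^ 5 * 2 ^ k := by
            gcongr
            have : 0 < (k : ℝ) ^ 4 := by positivity
            nlinarith
        _ ≤ 2 ^ k * 2 ^ k := by gcongr
        _ = _ := by ring
    rw [mul_comm (2 : ℝ), mul_assoc, inv_mul_le_iff₀ (by positivity), mul_one, pow_add _ _ k]
    calc 2 * (b : ℝ) ^ (Nkb b k + 4 * k + m * 2 ^ l + 2 ^ (l - 1) + h)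
        ≤ 2 * ((b * (2 : ℝ) ^ (2 ^ (k + 1))) * (b : ℝ) ^ h) := by gcongr
      _ = (2 : ℝ) ^ (2 ^ (k + 1)) * (2 * (b : ℝ) * (b : ℝ) ^ h) := by ring
      _ ≤ _ := by gcongr
  have c5 : 2 ≤ (b : ℝ) ^ (Nkb b k + 4 * k + m * 2 ^ l) * (v - u) := by
    have b1 : (1 : ℝ) ≤ b := by exact_mod_cast (by omega : 1 ≤ b)
    have b2 : (2 : ℝ) ≤ b := by exact_mod_cast hb
    have s1 : (2 : ℝ) ^ (2 ^ k) * 2 ^ (4 * k) ≤ (b : ℝ) ^ (Nkb b k + 4 * k + m * 2 ^ l) := by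
      calc (2 : ℝ) ^ (2 ^ k) * 2 ^ (4 * k) ≤ (b : ℝ) ^ Nkb b k * (b : ℝ) ^ (4 * k) := by
            gcongr
            exact N1 b k hb
        _ = (b : ℝ) ^ (Nkb b k + 4 * k) := by rw [pow_add]
        _ ≤ _ := pow_le_pow_right₀ b1 (by omega)
    calc (2 : ℝ) ≤ 2 ^ (3 * k) := by
          calc (2 : ℝ) = 2 ^ 1 := by norm_num
            _ ≤ _ := pow_le_pow_right₀ (by norm_num) (by omega)
      _ = (2 : ℝ) ^ (2 ^ k) * 2 ^ (4 * k) * ((2 : ℝ) ^ (2 ^ k + k))⁻¹ := by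
          rw [eq_mul_inv_iff_mul_eq₀ (by positivity), ← pow_add, ← pow_add]
          congr 1; ring
      _ ≤ _ := by gcongr
  have main := count b h a (Nkb b k + 4 * k + m * 2 ^ l) (2 ^ (l - 1)) (by omega) hh ha c3
    t (w * E) ht0 c1 c2 _ u v (by positivity) hu c4 c5 S hS
  refine main.trans ?_
  have hW : 0 ≤ v - u := le_trans (by positivity) huv
  gcongr
  have w' : w = ((nkb b k - l + 1 : ℕ) : ℝ) := by
    rw [hw]; push_cast [hl2]; ring
  have x1 : Real.exp (-(w * E)) ≤ Real.exp (-(h * Real.log b * 3)) * Real.exp (-(w * 10)) := by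
    rw [← Real.exp_add]
    apply Real.exp_le_exp.2
    have : 0 ≤ h * Real.log b := by positivity
    have hwX : h * Real.log b ≤ w * (h * Real.log b) := le_mul_of_one_le_left this hw1
    have hwE : w * E = 3 * (w * (h * Real.log b)) + w * 10 := by rw [hE]; ring
    rw [hwE]
    linarith
  refine x1.trans ?_
  have x2 : Real.exp (-(h * Real.log b * 3)) = ((b : ℝ) ^ (3 * h))⁻¹ := by
    rw [Real.exp_neg]
    congr 1
    rw [show (h : ℝ) * Real.log b * 3 = ((3 * h : ℕ) : ℝ) * Real.log b by push_cast; ring,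
      Real.exp_nat_mul, Real.exp_log hb0]
  have x3 : Real.exp (-(w * 10)) ≤ ((1024 : ℝ) ^ (nkb b k - l + 1))⁻¹ := by
    rw [Real.exp_neg, w', Real.exp_nat_mul]
    gcongr
    have : (2 : ℝ) ≤ Real.exp 1 := by linarith [Real.add_one_le_exp (1 : ℝ)]
    calc (1024 : ℝ) = 2 ^ 10 := by norm_num
      _ ≤ Real.exp 1 ^ 10 := by gcongr
      _ = Real.exp 10 := by rw [← Real.exp_nat_mul]; norm_num
  rw [x2]
  gcongr

lemma geom_aux (r : ℝ) (hr0 : 0 ≤ r) (hr : r ≤ 1 / 2) (n : ℕ) :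
    ∑ i ∈ Finset.range n, r ^ i ≤ 2 := by
  calc ∑ i ∈ Finset.range n, r ^ i ≤ ∑ i ∈ Finset.range n, (1 / 2 : ℝ) ^ i := by gcongr
    _ ≤ 2 := sum_geometric_two_le n

lemma sum_inv_sq (k : ℕ) : ∑ b ∈ Finset.Icc 2 k, ((b : ℝ) ^ 2)⁻¹ ≤ 1 := by
  have : ∀ n : ℕ, ∑ b ∈ Finset.Icc 2 (n + 1), ((b : ℝ) ^ 2)⁻¹ ≤ 1 - 1 / ((n : ℝ) + 1) := by
    intro n
    induction n with
    | zero => simp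
    | succ n ih =>
      rw [Finset.sum_Icc_succ_top (by omega)]
      have h1 : (((n + 1 + 1 : ℕ) : ℝ) ^ 2)⁻¹ ≤ 1 / ((n : ℝ) + 1) - 1 / ((n : ℝ) + 1 + 1) := by
        push_cast
        rw [div_sub_div _ _ (by positivity) (by positivity), inv_eq_one_div,
          div_le_div_iff₀ (by positivity) (by positivity)]
        nlinarith [(Nat.cast_nonneg n : (0 : ℝ) ≤ n)]
      push_cast at *
      linarith
  rcases k with _ | n
  · simp
  · have h0 : (0 : ℝ) ≤ 1 / ((n : ℝ) + 1) := by positivity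
    linarith [this n]

/-- The total number of bad ticks is small. -/
lemma union_bound (k : ℕ) (W : ℝ) (hW : 0 ≤ W) (T n : ℕ → ℕ)
    (S : ℕ → ℕ → ℕ → ℕ → ℕ → Finset ℕ)
    (hS : ∀ b ∈ Finset.Icc 2 k, ∀ g ∈ Finset.range (T b), ∀ a ∈ Finset.range (b ^ (g + 1)),
      ∀ i ∈ Finset.range (n b), ∀ m ∈ Finset.range (2 ^ (i + 1)),
      ((S b g a i m).card : ℝ) ≤ 8 * W * (((b : ℝ) ^ (3 * (g + 1)))⁻¹ * ((1024 : ℝ) ^ (i + 1))⁻¹)) :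
    ((((Finset.Icc 2 k).biUnion fun b => (Finset.range (T b)).biUnion fun g =>
      (Finset.range (b ^ (g + 1))).biUnion fun a => (Finset.range (n b)).biUnion fun i =>
      (Finset.range (2 ^ (i + 1))).biUnion fun m => S b g a i m).card : ℕ) : ℝ) ≤ W / 16 := by
  have gen : ∀ (s : Finset ℕ) (f : ℕ → Finset ℕ) (c : ℕ → ℝ),
      (∀ x ∈ s, ((f x).card : ℝ) ≤ c x) → (((s.biUnion f).card : ℕ) : ℝ) ≤ ∑ x ∈ s, c x := by
    intro s f c hc
    calc (((s.biUnion f).card : ℕ) : ℝ) ≤ ((∑ x ∈ s, (f x).card : ℕ) : ℝ) := by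
          exact_mod_cast Finset.card_biUnion_le
      _ = ∑ x ∈ s, ((f x).card : ℝ) := by push_cast; rfl
      _ ≤ _ := Finset.sum_le_sum hc
  refine (gen _ _ (fun b => W / 16 * ((b : ℝ) ^ 2)⁻¹) ?_).trans ?_
  swap
  · rw [← Finset.mul_sum]
    have := sum_inv_sq k
    have h0 : 0 ≤ W / 16 := by positivity
    nlinarith
  intro b hb
  have hb2 : 2 ≤ b := (Finset.mem_Icc.1 hb).1
  have hb' : (2 : ℝ) ≤ b := by exact_mod_cast hb2
  have hb0 : (0 : ℝ) < b := by linarith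
  refine (gen _ _ (fun g => W / 32 * ((b : ℝ) ^ 2)⁻¹ * (((b : ℝ) ^ 2)⁻¹) ^ g) ?_).trans ?_
  swap
  · rw [← Finset.mul_sum]
    have := geom_aux (((b : ℝ) ^ 2)⁻¹) (by positivity) (by
      rw [inv_eq_one_div, div_le_div_iff₀ (by positivity) (by norm_num)]; nlinarith) (T b)
    have h0 : 0 ≤ W / 32 * ((b : ℝ) ^ 2)⁻¹ := by positivity
    nlinarith
  intro g hg
  refine (gen _ _ (fun a => W / 32 * ((b : ℝ) ^ (3 * (g + 1)))⁻¹) ?_).trans ?_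
  swap
  · rw [Finset.sum_const, Finset.card_range, nsmul_eq_mul]
    push_cast
    apply le_of_eq
    rw [inv_pow, ← pow_mul]
    field_simp
    ring
  intro a ha
  refine (gen _ _ (fun i => W / 64 * ((b : ℝ) ^ (3 * (g + 1)))⁻¹ * (1 / 512 : ℝ) ^ i) ?_).trans ?_
  swap
  · rw [← Finset.mul_sum]
    have := geom_aux (1 / 512) (by norm_num) (by norm_num) (n b)
    have h0 : 0 ≤ W / 64 * ((b : ℝ) ^ (3 * (g + 1)))⁻¹ := by positivity
    nlinarith
  intro i hi
  refine (gen _ _ (fun m => 8 * W * (((b : ℝ) ^ (3 * (g + 1)))⁻¹ * ((1024 : ℝ) ^ (i + 1))⁻¹))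
    (hS b hb g hg a ha i hi)).trans ?_
  rw [Finset.sum_const, Finset.card_range, nsmul_eq_mul]
  apply le_of_eq
  have e : (1024 : ℝ) ^ (i + 1) = 2 ^ (i + 1) * (512 ^ i * 512) := by
    rw [← pow_succ, ← mul_pow]; norm_num
  rw [e]
  push_cast
  rw [div_pow, one_pow]
  field_simp
  ring

theorem stmt15 (k : ℕ) (hk : 100 ≤ k)
    (Ω : Set ℝ) (hΩ : Ω ⊆ Set.Ico (0 : ℝ) 1) (hΩ' : Ω.OrdConnected)
    (hμ : (2⁻¹ : ENNReal) ^ (2 ^ k + k) ≤ MeasureTheory.volume Ω) :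
    ∃ a : ℕ,
      Set.Ico ((a : ℝ) * ((2 : ℝ) ^ (2 ^ (k + 1) + k))⁻¹)
          (((a : ℝ) + 1) * ((2 : ℝ) ^ (2 ^ (k + 1) + k))⁻¹) ⊆ Ω ∧
      ∀ b : ℕ, 2 ≤ b → b ≤ k →
        Set.Ico ((a : ℝ) * ((2 : ℝ) ^ (2 ^ (k + 1) + k))⁻¹)
            (((a : ℝ) + 1) * ((2 : ℝ) ^ (2 ^ (k + 1) + k))⁻¹) ∩ Hset b k Ω = ∅ := by
  have hk0 : 0 < k := by omega
  -- the end points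
  have hne : Ω.Nonempty := by
    rw [Set.nonempty_iff_ne_empty]
    rintro rfl
    rw [MeasureTheory.measure_empty, nonpos_iff_eq_zero] at hμ
    exact absurd hμ (by simp)
  have hbb : BddBelow Ω := ⟨0, fun x hx => (hΩ hx).1⟩
  have hba : BddAbove Ω := ⟨1, fun x hx => (hΩ hx).2.le⟩
  set u := sInf Ω with hu
  set v := sSup Ω with hv
  have hu0 : 0 ≤ u := le_csInf hne fun x hx => (hΩ hx).1
  have hsub : Ω ⊆ Set.Icc u v := fun x hx => ⟨csInf_le hbb hx, le_csSup hba hx⟩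
  have hsup : Set.Ioo u v ⊆ Ω := by
    rintro x ⟨h1, h2⟩
    obtain ⟨y, hy, hyx⟩ := exists_lt_of_csInf_lt hne h1
    obtain ⟨z, hz, hxz⟩ := exists_lt_of_lt_csSup hne h2
    exact hΩ'.out hy hz ⟨hyx.le, hxz.le⟩
  have huv : ((2 : ℝ) ^ (2 ^ k + k))⁻¹ ≤ v - u := by
    have h1 := hμ.trans (MeasureTheory.measure_mono hsub)
    rw [Real.volume_Icc] at h1
    have h2 : ((2⁻¹ : ENNReal) ^ (2 ^ k + k)) = ENNReal.ofReal (((2 : ℝ) ^ (2 ^ k + k))⁻¹) := by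
      rw [← inv_pow, ENNReal.ofReal_pow (by norm_num), ENNReal.ofReal_inv_of_pos (by norm_num)]
      norm_num
    rw [h2] at h1
    by_contra hc
    push Not at hc
    exact absurd h1 (not_le.2 ((ENNReal.ofReal_lt_ofReal_iff (by positivity)).2 hc))
  set δ : ℝ := ((2 : ℝ) ^ (2 ^ (k + 1) + k))⁻¹ with hδ
  have hδ0 : 0 < δ := by positivity
  set W : ℝ := (v - u) / δ with hWdef
  have hW4 : 4 ≤ W := by
    rw [hWdef, le_div_iff₀ hδ0]
    refine le_trans ?_ huv
    rw [hδ, ← div_eq_mul_inv, div_le_iff₀ (by positivity), ← div_eq_inv_mul,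
      le_div_iff₀ (by positivity), show (4 : ℝ) = 2 ^ 2 by norm_num, ← pow_add]
    refine pow_le_pow_right₀ (by norm_num) ?_
    have h1 : k < 2 ^ k := Nat.lt_two_pow_self
    have h2 : 2 ^ (k + 1) = 2 * 2 ^ k := by rw [pow_succ']
    omega
  set G : Finset ℕ := Finset.Ico (⌊u / δ⌋₊ + 1) ⌊v / δ⌋₊ with hG
  have hGsub : ∀ A ∈ G, Set.Ico ((A : ℝ) * δ) (((A : ℝ) + 1) * δ) ⊆ Ω := by
    intro A hA x hx
    rw [hG, Finset.mem_Ico] at hA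
    apply hsup
    constructor
    · refine lt_of_lt_of_le ?_ hx.1
      rw [← div_lt_iff₀ hδ0]
      exact (Nat.lt_floor_add_one _).trans_le (by exact_mod_cast hA.1)
    · refine hx.2.trans_le ?_
      rw [← le_div_iff₀ hδ0]
      have h1 : ((A + 1 : ℕ) : ℝ) ≤ (⌊v / δ⌋₊ : ℝ) := by exact_mod_cast hA.2
      have h2 : (0 : ℝ) ≤ v / δ := by
        have : 0 ≤ v - u := le_trans (by positivity) huv
        have : 0 ≤ v := by linarith
        positivity
      push_cast at h1
      exact h1.trans (Nat.floor_le h2)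
  have hGcard : W - 2 ≤ (G.card : ℝ) := by
    rw [hG, Nat.card_Ico]
    have h1 := Nat.lt_floor_add_one (v / δ)
    have h2 : (⌊u / δ⌋₊ : ℝ) ≤ u / δ := Nat.floor_le (by positivity)
    have h3 : ⌊v / δ⌋₊ ≤ (⌊v / δ⌋₊ - (⌊u / δ⌋₊ + 1)) + ⌊u / δ⌋₊ + 1 := by omega
    have h4 : (⌊v / δ⌋₊ : ℝ) ≤ ((⌊v / δ⌋₊ - (⌊u / δ⌋₊ + 1) : ℕ) : ℝ) + ⌊u / δ⌋₊ + 1 := by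
      exact_mod_cast h3
    rw [hWdef, sub_div]
    linarith
  -- bad ticks
  let P : ℕ → ℕ → ℕ → ℕ → ℕ → ℝ → Prop := fun b h a l m x =>
    46 * (2 : ℝ) ^ (((l : ℝ) - 1) / 2) * (h : ℝ) ^ (-(3 / 2) : ℝ) *
        Real.sqrt ((nkb b k : ℝ) - l + 1) <
      F (Nkb b k + 4 * k + m * 2 ^ l) (2 ^ (l - 1))
        ((a : ℝ) / (b : ℝ) ^ h) (((a : ℝ) + 1) / (b : ℝ) ^ h) (bseq b x)
  let S : ℕ → ℕ → ℕ → ℕ → ℕ → Finset ℕ := fun b g a i m =>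
    G.filter fun A => i ≤ nkb b k ∧ nkb b k ≤ 2 * (nkb b k - i) ∧
      Nkb b k + 4 * k + m * 2 ^ (nkb b k - i) + 2 ^ (nkb b k - i - 1) ≤ Nkb b (k + 1) ∧
      ∃ x : ℝ, A * δ ≤ x ∧ x < (A + 1) * δ ∧ u ≤ x ∧ x ≤ v ∧ P b (g + 1) a (nkb b k - i) m x
  have ub := union_bound k W (by linarith) (fun b => Tbk b k) (fun b => nkb b k + 1) S (by
    intro b hb g hg a ha i hi m hm
    rw [Finset.mem_Icc] at hb
    rw [Finset.mem_range] at hg ha hi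
    rcases (S b g a i m).eq_empty_or_nonempty with he | ⟨A, hA⟩
    · rw [he]; simp only [Finset.card_empty, Nat.cast_zero]
      have : 0 ≤ W := by linarith
      positivity
    · have hA' := (Finset.mem_filter.1 hA).2
      have key := tuple k b (g + 1) a (nkb b k - i) m hk hb.1 hb.2 (by omega) (by omega) ha hA'.2.1
        (Nat.sub_le _ _) hA'.2.2.1 u v hu0 huv (S b g a i m) (fun A hA =>
          (Finset.mem_filter.1 hA).2.2.2.2)
      have e : nkb b k - (nkb b k - i) + 1 = i + 1 := by omega
      rw [e] at key
      exact key)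
  obtain ⟨A, hAG, hAn⟩ := Finset.exists_mem_notMem_of_card_lt_card (s := (Finset.Icc 2 k).biUnion fun b => (Finset.range (Tbk b k)).biUnion fun g =>
      (Finset.range (b ^ (g + 1))).biUnion fun a => (Finset.range (nkb b k + 1)).biUnion fun i =>
      (Finset.range (2 ^ (i + 1))).biUnion fun m => S b g a i m) (t := G) (by
    have : (((((Finset.Icc 2 k).biUnion fun b => (Finset.range (Tbk b k)).biUnion fun g =>
      (Finset.range (b ^ (g + 1))).biUnion fun a => (Finset.range (nkb b k + 1)).biUnion fun i =>
      (Finset.range (2 ^ (i + 1))).biUnion fun m => S b g a i m).card : ℕ) : ℝ)) < (G.card : ℝ) := by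
      refine lt_of_le_of_lt ub ?_
      linarith
    exact_mod_cast this)
  refine ⟨A, hGsub A hAG, fun b hb hbk => ?_⟩
  rw [Set.eq_empty_iff_forall_notMem]
  rintro x ⟨hxA, hxH⟩
  apply hAn
  simp only [Hset, Set.mem_iUnion, Set.mem_setOf_eq] at hxH
  obtain ⟨h, hh1, hhT, a, ha, l, hl1, hl2, m, hm, hxΩ, hlt⟩ := hxH
  obtain ⟨g, rfl⟩ : ∃ g, h = g + 1 := ⟨h - 1, by omega⟩
  obtain ⟨i, hi⟩ : ∃ i, nkb b k = l + i := ⟨nkb b k - l, by omega⟩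
  have hli : nkb b k - i = l := by omega
  simp only [Finset.mem_biUnion, Finset.mem_range, Finset.mem_Icc]
  refine ⟨b, ⟨hb, hbk⟩, g, by omega, a, ha, i, by omega, m, ?_, ?_⟩
  · -- bound on m
    obtain ⟨n1, -, -⟩ := n_bounds b k hk hb hbk
    have h1 : ((Nkb b k + 4 * k + m * 2 ^ l + 2 ^ (l - 1) : ℕ) : ℝ) ≤ (Nkb b (k + 1) : ℝ) := by
      exact_mod_cast hm
    push_cast at h1
    have h2 : (m : ℝ) * 2 ^ l ≤ 2 ^ nkb b k := by
      have : (0 : ℝ) < 2 ^ (l - 1) := by positivity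
      linarith
    rw [hi, pow_add, mul_comm ((2 : ℝ) ^ l)] at h2
    have h3 : (m : ℝ) ≤ 2 ^ i := le_of_mul_le_mul_right h2 (by positivity)
    have h4 : m ≤ 2 ^ i := by exact_mod_cast h3
    rw [pow_succ]
    have : 0 < 2 ^ i := by positivity
    omega
  · refine Finset.mem_filter.2 ⟨hAG, by omega, by omega, ?_, x, hxA.1, hxA.2, (hsub hxΩ).1,
      (hsub hxΩ).2, ?_⟩
    · rw [hli]; exact hm
    · rw [hli]; exact hlt
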